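/- arXiv:2303.07954 — 2 statements merged into one kernel-verified Lean document; each statement's English description precedes it below -/
import Mathlib

section
/- Let Ω be a locally compact Hausdorff topological space with Borel σ-algebra B. Let (m_n) be a sequence of finite nonnegative Borel measures on Ω which is uniformly absolutely continuous with respect to a finite Radon measure m and which converges vaguely to m. Let f : Ω → ℝ be a continuous function which has uniformly absolutely continuous (m_n)-integrals on Ω. Then sup_n ∫_Ω |f| dm_n < ∞. -/
open MeasureTheory Filter Topology

/-!
Uniform absolute continuity with respect to the tight measure `m` makes the family `(mₙ)` tight,
so the integrals of `|f|` are uniformly small off one compact set `K`. On `K` the function `f` is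
bounded, and testing vague convergence against a compactly supported `g ≥ 0` with `g = 1` on `K`
bounds `mₙ(K)` uniformly in `n`.
-/

open Set
open scoped CompactlySupported

section Definitions

variable {Ω ι E : Type*} [MeasurableSpace Ω]

/-- The family `μ` is uniformly absolutely continuous with respect to `m`: sets of small
`m`-measure have uniformly small `μ i`-measure. It transfers tightness from `m` to `μ`. -/
def UniformlyAbsolutelyContinuous (μ : ι → Measure Ω) (m : Measure Ω) : Prop :=
  ∀ ε : ℝ, 0 < ε → ∃ δ : ℝ, 0 < δ ∧ ∀ A : Set Ω, MeasurableSet A →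
    m A < ENNReal.ofReal δ → ∀ i, μ i A < ENNReal.ofReal ε

/-- The function `f` has uniformly absolutely continuous `(μ i)`-integrals: its integral over a set
of small `μ i`-measure is small, uniformly in `i`. Mathlib's `UnifIntegrable` varies the function
and fixes the measure; here the measure varies. -/
def HasUniformlyAbsolutelyContinuousIntegrals [NormedAddCommGroup E] (f : Ω → E)
    (μ : ι → Measure Ω) : Prop :=
  ∀ ε : ℝ, 0 < ε → ∃ δ : ℝ, 0 < δ ∧ ∀ i, ∀ A : Set Ω, MeasurableSet A →
    μ i A < ENNReal.ofReal δ → ∫ x in A, ‖f x‖ ∂(μ i) < ε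

/-- The family `μ` is vaguely bounded: the integrals of each compactly supported continuous function
are bounded above. Applied to `g` and `-g`, this is boundedness in absolute value. It is what
remains of vague convergence for an unordered family. -/
def VaguelyBounded [TopologicalSpace Ω] (μ : ι → Measure Ω) : Prop :=
  ∀ g : C_c(Ω, ℝ), BddAbove (range fun i => ∫ x, g x ∂(μ i))

end Definitions

section Boundedness

variable {Ω ι E : Type*} [TopologicalSpace Ω] [MeasurableSpace Ω] [NormedAddCommGroup E]
  {μ : ι → Measure Ω} {f : Ω → E} {K : Set Ω}

theorem exists_isCompact_isClosed_measure_compl_lt [R1Space Ω] {S : Set (Measure Ω)}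
    (hS : IsTightMeasureSet S) {ε : ENNReal} (hε : 0 < ε) :
    ∃ K : Set Ω, IsCompact K ∧ IsClosed K ∧ ∀ ν ∈ S, ν Kᶜ < ε := by
  obtain ⟨r, hr, hrε⟩ := exists_between hε
  obtain ⟨K, hK, hKr⟩ := isTightMeasureSet_iff_exists_isCompact_measure_compl_le.mp hS r hr
  refine ⟨closure K, hK.closure, isClosed_closure, fun ν hν => ?_⟩
  calc ν (closure K)ᶜ ≤ ν Kᶜ := measure_mono (compl_subset_compl.mpr subset_closure)
    _ ≤ r := hKr ν hν
    _ < ε := hrε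

theorem UniformlyAbsolutelyContinuous.isTightMeasureSet_range [R1Space Ω] [OpensMeasurableSpace Ω]
    {m : Measure Ω} (hμ : UniformlyAbsolutelyContinuous μ m) (hm : IsTightMeasureSet {m}) :
    IsTightMeasureSet (range μ) := by
  refine isTightMeasureSet_iff_exists_isCompact_measure_compl_le.mpr fun ε hε => ?_
  obtain ⟨r, -, hr, hrε⟩ := ENNReal.lt_iff_exists_real_btwn.mp hε
  obtain ⟨δ, hδ, hμδ⟩ := hμ r (ENNReal.ofReal_pos.mp hr)
  obtain ⟨K, hK, hKc, hKδ⟩ :=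
    exists_isCompact_isClosed_measure_compl_lt hm (ENNReal.ofReal_pos.mpr hδ)
  refine ⟨K, hK, forall_mem_range.mpr fun i => ?_⟩
  exact (hμδ Kᶜ hKc.measurableSet.compl (hKδ m rfl) i).le.trans hrε.le

theorem HasUniformlyAbsolutelyContinuousIntegrals.exists_setIntegral_compl_lt [R1Space Ω]
    [OpensMeasurableSpace Ω] (hf : HasUniformlyAbsolutelyContinuousIntegrals f μ)
    (hμ : IsTightMeasureSet (range μ)) {ε : ℝ} (hε : 0 < ε) :
    ∃ K : Set Ω, IsCompact K ∧ IsClosed K ∧ ∀ i, ∫ x in Kᶜ, ‖f x‖ ∂(μ i) < ε := by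
  obtain ⟨δ, hδ, hfδ⟩ := hf ε hε
  obtain ⟨K, hK, hKc, hKδ⟩ :=
    exists_isCompact_isClosed_measure_compl_lt hμ (ENNReal.ofReal_pos.mpr hδ)
  exact ⟨K, hK, hKc, fun i =>
    hfδ i Kᶜ hKc.measurableSet.compl (hKδ (μ i) (mem_range_self i))⟩

theorem vaguelyBounded_of_tendsto {μ : ℕ → Measure Ω} {L : C_c(Ω, ℝ) → ℝ}
    (h : ∀ g : C_c(Ω, ℝ), Tendsto (fun n => ∫ x, g x ∂(μ n)) atTop (𝓝 (L g))) :
    VaguelyBounded μ :=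
  fun g => (h g).bddAbove_range

namespace VaguelyBounded

variable [R1Space Ω] [LocallyCompactSpace Ω] [OpensMeasurableSpace Ω]
  [∀ i, IsFiniteMeasureOnCompacts (μ i)]

theorem bddAbove_measureReal (hμ : VaguelyBounded μ) (hK : IsCompact K) :
    BddAbove (range fun i => (μ i).real K) := by
  obtain ⟨g, hgK, hg_supp, -, hg⟩ :=
    exists_continuousMap_one_of_isCompact_subset_isOpen hK isOpen_univ (subset_univ K)
  refine (hμ ⟨g, hg_supp⟩).range_mono _ fun i => ?_
  have hg_int : Integrable g (μ i) := g.continuous.integrable_of_hasCompactSupport hg_supp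
  have hg_fin : μ i {x | 1 ≤ g x} ≠ ⊤ := (hg_int.measure_ge_lt_top one_pos).ne
  calc (μ i).real K ≤ (μ i).real {x | 1 ≤ g x} := measureReal_mono (fun x hx => (hgK hx).ge) hg_fin
    _ = 1 * (μ i).real {x | 1 ≤ g x} := (one_mul _).symm
    _ ≤ ∫ x, g x ∂(μ i) :=
      mul_meas_ge_le_integral_of_nonneg (ae_of_all _ fun x => (hg x).1) hg_int 1

theorem bddAbove_setIntegral_norm (hμ : VaguelyBounded μ) (hK : IsCompact K)
    (hf : ∃ M : ℝ, ∀ x ∈ K, ‖f x‖ ≤ M) :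
    BddAbove (range fun i => ∫ x in K, ‖f x‖ ∂(μ i)) := by
  obtain ⟨M, hM⟩ := hf
  obtain ⟨C, hC⟩ := hμ.bddAbove_measureReal hK
  refine ⟨|M| * C, forall_mem_range.mpr fun i => ?_⟩
  calc ∫ x in K, ‖f x‖ ∂(μ i) ≤ |M| * (μ i).real K :=
        (Real.le_norm_self _).trans <| norm_setIntegral_le_of_norm_le_const hK.measure_lt_top
          fun x hx => (norm_norm (f x)).trans_le ((hM x hx).trans (le_abs_self M))
    _ ≤ |M| * C := by gcongr; exact hC (mem_range_self i)

end VaguelyBounded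

theorem sup_integral_abs_lt_top_general [R1Space Ω] [LocallyCompactSpace Ω]
    [OpensMeasurableSpace Ω] [∀ i, IsFiniteMeasureOnCompacts (μ i)]
    (htight : IsTightMeasureSet (range μ)) (hvague : VaguelyBounded μ)
    (hf : ∀ K : Set Ω, IsCompact K → ∃ M : ℝ, ∀ x ∈ K, ‖f x‖ ≤ M)
    (hfint : ∀ i, Integrable f (μ i)) (hfuac : HasUniformlyAbsolutelyContinuousIntegrals f μ) :
    ∃ C : ℝ, ∀ i, ∫ x, ‖f x‖ ∂(μ i) ≤ C := by
  obtain ⟨K, hK, hKc, hK_compl⟩ := hfuac.exists_setIntegral_compl_lt htight one_pos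
  obtain ⟨C, hC⟩ := hvague.bddAbove_setIntegral_norm hK (hf K hK)
  refine ⟨C + 1, fun i => ?_⟩
  calc ∫ x, ‖f x‖ ∂(μ i) = ∫ x in K, ‖f x‖ ∂(μ i) + ∫ x in Kᶜ, ‖f x‖ ∂(μ i) :=
        (integral_add_compl hKc.measurableSet (hfint i).norm).symm
    _ ≤ C + 1 := add_le_add (hC (mem_range_self i)) (hK_compl i).le

end Boundedness

/-- If `(mₙ)` is uniformly absolutely continuous with respect to a finite Radon measure
`m` and vaguely convergent to `m`, and `f` is a continuous function with uniformly
absolutely continuous `(mₙ)`-integrals, then `supₙ ∫ |f| dmₙ < ∞`. -/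
theorem sup_integral_abs_lt_top
    {Ω : Type*} [TopologicalSpace Ω] [LocallyCompactSpace Ω] [T2Space Ω]
    [MeasurableSpace Ω] [BorelSpace Ω]
    (m : Measure Ω) (mseq : ℕ → Measure Ω)
    [IsFiniteMeasure m] (hfin : ∀ n, IsFiniteMeasure (mseq n))
    (hRadon : m.InnerRegular)
    (huac : ∀ ε : ℝ, 0 < ε → ∃ δ : ℝ, 0 < δ ∧ ∀ E : Set Ω, MeasurableSet E →
      m E < ENNReal.ofReal δ → ∀ n, mseq n E < ENNReal.ofReal ε)
    (hvague : ∀ g : Ω → ℝ, Continuous g → Tendsto g (cocompact Ω) (𝓝 0) →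
      Tendsto (fun n => ∫ x, g x ∂(mseq n)) atTop (𝓝 (∫ x, g x ∂m)))
    (f : Ω → ℝ) (hf : Continuous f)
    (hfint : ∀ n, Integrable f (mseq n))
    (hfuac : ∀ ε : ℝ, 0 < ε → ∃ δ : ℝ, 0 < δ ∧ ∀ n, ∀ A : Set Ω, MeasurableSet A →
      mseq n A < ENNReal.ofReal δ → ∫ x in A, |f x| ∂(mseq n) < ε) :
    ∃ C : ℝ, ∀ n, ∫ x, |f x| ∂(mseq n) ≤ C := by
  exact sup_integral_abs_lt_top_general
    (UniformlyAbsolutelyContinuous.isTightMeasureSet_range huac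
      isTightMeasureSet_singleton_of_innerRegular)
    (vaguelyBounded_of_tendsto fun g =>
      hvague g g.continuous g.hasCompactSupport.is_zero_at_infty)
    (fun _ hK => hK.exists_bound_of_continuousOn hf.continuousOn) hfint hfuac
end

section
/- Let Ω be a locally compact Hausdorff topological space with Borel σ-algebra B. Let m and m_n (n ∈ ℕ) be finite nonnegative Borel measures on Ω, with m Radon. Let f and f_n (n ∈ ℕ) be Borel measurable real-valued functions on Ω. Suppose that: (i') f_n converges to f in m-measure; (ii) f is continuous; (iii) (f_n) and f have uniformly absolutely continuous (m_n)-integrals on Ω; (iv) (m_n) converges vaguely to m and is uniformly absolutely continuous with respect to m. Then f ∈ L¹(m) and lim_n ∫_A f_n dm_n = ∫_A f dm for every Borel set A. -/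
open MeasureTheory Filter Topology

open scoped ENNReal NNReal

/-!
By inner regularity and Urysohn's lemma, the indicator of a Borel set `A` agrees off a set of small
`m`-measure with a compactly supported continuous function. Uniform absolute continuity makes the
error small for all the measures `μ i` at once, so that vague convergence to `m` improves to
convergence on every Borel set.

For setwise convergent measures the integral of a fixed simple function converges. Vitali's argument
works uniformly in the measure: if `u k` converges to `f` in `m`-measure, then the set where `u k`
is far from `f` is eventually small for all the `μ i` simultaneously, so by uniform integrability
`∫ ‖u k - f‖ ∂μ i` is small uniformly in `i`. Applied to simple functions approximating `f`, this
exchanges the two limits and gives `∫ f ∂μ i → ∫ f ∂m` over `A`; applied to the functions `F i`, it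
replaces `f` by `F i`. Fatou's lemma for setwise convergence transfers uniform integrability of `f`
to the limit `m`.
-/

section Definitions

variable {Ω ι E : Type*} [MeasurableSpace Ω]

/-- Uniform absolute continuity of the family `μ` with respect to `m`: the values `μ i A` are small,
uniformly in `i`, as soon as `m A` is small. -/
def UnifAbsCont (μ : ι → Measure Ω) (m : Measure Ω) : Prop :=
  ∀ ε > 0, ∃ δ > 0, ∀ A, MeasurableSet A → m A < δ → ∀ i, μ i A < ε

/-- The family `f` has uniformly absolutely continuous `μ`-integrals: the integral of `‖f i‖` over
`A` is small, uniformly in `i`, as soon as `μ i A` is small. The integrals are lower Lebesgue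
integrals, so that no integrability has to be presupposed. -/
def UnifAbsContIntegrals [ENorm E] (f : ι → Ω → E) (μ : ι → Measure Ω) : Prop :=
  ∀ ε > 0, ∃ δ > 0, ∀ i A, MeasurableSet A → μ i A < δ → ∫⁻ x in A, ‖f i x‖ₑ ∂μ i ≤ ε

/-- Setwise convergence of measures: convergence of the values on each measurable set. -/
def TendstoSetwise (μ : ι → Measure Ω) (l : Filter ι) (m : Measure Ω) : Prop :=
  ∀ A, MeasurableSet A → Tendsto (fun i ↦ μ i A) l (𝓝 (m A))

/-- Vague convergence of measures, tested against the continuous functions vanishing at infinity.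
The tests are Bochner integrals, hence meaningful for finite measures only. -/
def TendstoVaguely [TopologicalSpace Ω] (μ : ι → Measure Ω) (l : Filter ι) (m : Measure Ω) : Prop :=
  ∀ g : Ω → ℝ, Continuous g → Tendsto g (cocompact Ω) (𝓝 0) →
    Tendsto (fun i ↦ ∫ x, g x ∂μ i) l (𝓝 (∫ x, g x ∂m))

end Definitions

section UniformAbsoluteContinuity

variable {Ω ι κ E : Type*} [MeasurableSpace Ω] {l : Filter ι} {m : Measure Ω} {μ : ι → Measure Ω}

lemma UnifAbsCont.comp (h : UnifAbsCont μ m) (φ : κ → ι) : UnifAbsCont (fun k ↦ μ (φ k)) m :=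
  fun ε hε ↦ (h ε hε).imp fun _ hδ ↦ hδ.imp_right fun hA A hAm hlt k ↦ hA A hAm hlt (φ k)

lemma UnifAbsCont.of_ofReal
    (h : ∀ ε : ℝ, 0 < ε → ∃ δ : ℝ, 0 < δ ∧ ∀ A, MeasurableSet A → m A < ENNReal.ofReal δ →
      ∀ i, μ i A < ENNReal.ofReal ε) : UnifAbsCont μ m := by
  intro ε hε
  obtain ⟨r, -, hr, hrε⟩ := ENNReal.lt_iff_exists_real_btwn.1 hε
  obtain ⟨δ, hδ, hμ⟩ := h r (ENNReal.ofReal_pos.1 hr)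
  exact ⟨.ofReal δ, ENNReal.ofReal_pos.2 hδ, fun A hA hAδ i ↦ (hμ A hA hAδ i).trans hrε⟩

lemma UnifAbsContIntegrals.comp [ENorm E] {f : ι → Ω → E} (h : UnifAbsContIntegrals f μ)
    (φ : κ → ι) : UnifAbsContIntegrals (fun k ↦ f (φ k)) (fun k ↦ μ (φ k)) :=
  fun ε hε ↦ (h ε hε).imp fun _ hδ ↦ hδ.imp_right fun hA k ↦ hA (φ k)

lemma UnifAbsContIntegrals.of_enorm_le_mul [ENorm E] {f g : ι → Ω → E}
    (h : UnifAbsContIntegrals f μ) {C : ℝ≥0∞} (hC : C ≠ ∞)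
    (hgf : ∀ i x, ‖g i x‖ₑ ≤ C * ‖f i x‖ₑ) : UnifAbsContIntegrals g μ := by
  intro ε hε
  obtain ⟨c, hc, hcε⟩ := ENNReal.exists_pos_mul_lt hC hε.ne'
  obtain ⟨δ, hδ, hfδ⟩ := h c hc
  refine ⟨δ, hδ, fun i A hA hAδ ↦ ?_⟩
  calc ∫⁻ x in A, ‖g i x‖ₑ ∂μ i
      ≤ ∫⁻ x in A, C * ‖f i x‖ₑ ∂μ i := lintegral_mono (hgf i)
    _ = C * ∫⁻ x in A, ‖f i x‖ₑ ∂μ i := lintegral_const_mul' _ _ hC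
    _ ≤ C * c := by gcongr; exact hfδ i A hA hAδ
    _ ≤ ε := (mul_comm C c).trans_le hcε.le

lemma lintegral_le_setLIntegral_add_mul {ν : Measure Ω} {g : Ω → ℝ≥0∞} {A : Set Ω} {c : ℝ≥0∞}
    (hA : MeasurableSet A) (hg : ∀ x ∉ A, g x ≤ c) :
    ∫⁻ x, g x ∂ν ≤ ∫⁻ x in A, g x ∂ν + c * ν Set.univ := by
  rw [← lintegral_add_compl g hA]
  gcongr
  calc ∫⁻ x in Aᶜ, g x ∂ν
      ≤ ∫⁻ _ in Aᶜ, c ∂ν := setLIntegral_mono' hA.compl hg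
    _ = c * ν Aᶜ := setLIntegral_const _ _
    _ ≤ c * ν Set.univ := by gcongr; exact Set.subset_univ _

variable [NormedAddCommGroup E]

theorem tendsto_lintegral_edist_of_tendstoInMeasure {u : ι → Ω → E} {f : Ω → E} {C : ℝ≥0∞}
    (hC : C ≠ ∞) (hmass : ∀ᶠ i in l, μ i Set.univ ≤ C) (hac : UnifAbsCont μ m)
    (hf : ∀ i, AEStronglyMeasurable f (μ i)) (hint_u : UnifAbsContIntegrals u μ)
    (hint_f : UnifAbsContIntegrals (fun _ ↦ f) μ) (huf : TendstoInMeasure m u l f) :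
    Tendsto (fun i ↦ ∫⁻ x, edist (u i x) (f x) ∂μ i) l (𝓝 0) := by
  rw [ENNReal.tendsto_nhds_zero]
  intro ε hε
  have hε3 : 0 < ε / 3 := ENNReal.div_pos hε.ne' (by simp)
  obtain ⟨η, hη, hηC⟩ := ENNReal.exists_pos_mul_lt hC hε3.ne'
  obtain ⟨δu, hδu, hu⟩ := hint_u _ hε3
  obtain ⟨δf, hδf, hf'⟩ := hint_f _ hε3
  obtain ⟨δ, hδ, hμ⟩ := hac _ (lt_min hδu hδf)
  filter_upwards [hmass, (huf η hη).eventually_lt_const hδ] with i hi hbad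
  set A := toMeasurable m {x | η ≤ edist (u i x) (f x)}
  have hA : MeasurableSet A := measurableSet_toMeasurable _ _
  have hμA : μ i A < min δu δf := hμ A hA (by rwa [measure_toMeasurable]) i
  have hclose (x : Ω) (hx : x ∉ A) : edist (u i x) (f x) ≤ η :=
    (not_le.1 fun h ↦ hx (subset_toMeasurable _ _ h)).le
  have hfar : ∫⁻ x in A, edist (u i x) (f x) ∂μ i ≤ ε / 3 + ε / 3 :=
    calc ∫⁻ x in A, edist (u i x) (f x) ∂μ i
        ≤ ∫⁻ x in A, (‖u i x‖ₑ + ‖f x‖ₑ) ∂μ i :=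
          lintegral_mono fun x ↦ (edist_eq_enorm_sub _ _).trans_le enorm_sub_le
      _ = ∫⁻ x in A, ‖u i x‖ₑ ∂μ i + ∫⁻ x in A, ‖f x‖ₑ ∂μ i :=
          lintegral_add_right' _ (hf i).enorm.restrict
      _ ≤ ε / 3 + ε / 3 := add_le_add (hu i A hA (hμA.trans_le (min_le_left _ _)))
          (hf' i A hA (hμA.trans_le (min_le_right _ _)))
  calc ∫⁻ x, edist (u i x) (f x) ∂μ i
      ≤ ∫⁻ x in A, edist (u i x) (f x) ∂μ i + η * μ i Set.univ :=
        lintegral_le_setLIntegral_add_mul hA hclose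
    _ ≤ ε / 3 + ε / 3 + ε / 3 := by grw [hfar, hi, hηC]
    _ = ε := ENNReal.add_thirds ε

lemma UnifAbsContIntegrals.of_setIntegral_norm_lt {f : ι → Ω → E}
    (hf : ∀ i, Integrable (f i) (μ i))
    (h : ∀ ε : ℝ, 0 < ε → ∃ δ : ℝ, 0 < δ ∧ ∀ i A, MeasurableSet A →
      μ i A < ENNReal.ofReal δ → ∫ x in A, ‖f i x‖ ∂μ i < ε) : UnifAbsContIntegrals f μ := by
  intro ε hε
  obtain ⟨r, -, hr, hrε⟩ := ENNReal.lt_iff_exists_real_btwn.1 hε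
  obtain ⟨δ, hδ, hfδ⟩ := h r (ENNReal.ofReal_pos.1 hr)
  refine ⟨.ofReal δ, ENNReal.ofReal_pos.2 hδ, fun i A hA hAδ ↦ ?_⟩
  rw [← ofReal_integral_norm_eq_lintegral_enorm (hf i).integrableOn]
  exact (ENNReal.ofReal_le_ofReal (hfδ i A hA hAδ).le).trans hrε.le

lemma tendstoInMeasure_of_measure_lt_norm {u : ι → Ω → E} {f : Ω → E}
    (h : ∀ ε : ℝ, 0 < ε → Tendsto (fun i ↦ m {x | ε < ‖u i x - f x‖}) l (𝓝 0)) :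
    TendstoInMeasure m u l f := by
  refine tendstoInMeasure_iff_norm.2 fun ε hε ↦ ?_
  refine tendsto_of_tendsto_of_tendsto_of_le_of_le tendsto_const_nhds (h (ε / 2) (half_pos hε))
    (fun _ ↦ zero_le) fun i ↦ measure_mono fun x hx ↦ (half_lt_self hε).trans_le hx

lemma UnifAbsContIntegrals.integrable [NormedSpace ℝ E] {f : ι → Ω → E}
    (h : UnifAbsContIntegrals f μ) (i : ι) [IsFiniteMeasure (μ i)]
    (hf : AEStronglyMeasurable (f i) (μ i)) : Integrable (f i) (μ i) := by
  obtain ⟨δ, hδ, hδ1⟩ := h 1 one_pos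
  have hscaled : TendstoInMeasure (μ i) (fun (n : ℕ) x ↦ (n : ℝ)⁻¹ • f i x) atTop 0 := by
    refine tendstoInMeasure_of_tendsto_ae (fun n ↦ hf.const_smul _) (ae_of_all _ fun x ↦ ?_)
    simpa using! (tendsto_inv_atTop_nhds_zero_nat (𝕜 := ℝ)).smul_const (f i x)
  obtain ⟨n, hn, hn0⟩ :=
    (((hscaled 1 one_pos).eventually_lt_const hδ).and (eventually_gt_atTop 0)).exists
  set A := toMeasurable (μ i) {x | 1 ≤ edist ((n : ℝ)⁻¹ • f i x) ((0 : Ω → E) x)}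
  have hA : MeasurableSet A := measurableSet_toMeasurable _ _
  have hbound (x : Ω) (hx : x ∉ A) : ‖f i x‖ₑ < n := by
    have hlt : ‖(n : ℝ)⁻¹ • f i x‖ₑ < 1 := by
      simpa using! fun h ↦ hx (subset_toMeasurable _ _ h)
    rwa [enorm_smul, enorm_inv (by positivity), Real.enorm_natCast, mul_comm,
      ← div_eq_mul_inv, ENNReal.div_lt_iff (by simp [hn0.ne']) (by simp), one_mul] at hlt
  refine ⟨hf, ?_⟩
  calc ∫⁻ x, ‖f i x‖ₑ ∂μ i
      ≤ ∫⁻ x in A, ‖f i x‖ₑ ∂μ i + n * μ i Set.univ :=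
        lintegral_le_setLIntegral_add_mul hA fun x hx ↦ (hbound x hx).le
    _ ≤ 1 + n * μ i Set.univ := by grw [hδ1 i A hA (by rwa [measure_toMeasurable])]
    _ < ∞ := by finiteness

lemma tendsto_setIntegral_uniformity [NormedSpace ℝ E] {u : ι → Ω → E} {f : Ω → E}
    (hu : ∀ i, Integrable (u i) (μ i)) (hf : ∀ i, Integrable f (μ i))
    (huf : Tendsto (fun i ↦ ∫⁻ x, edist (u i x) (f x) ∂μ i) l (𝓝 0)) (A : Set Ω) :
    Tendsto (fun i ↦ (∫ x in A, f x ∂μ i, ∫ x in A, u i x ∂μ i)) l (uniformity E) := by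
  refine uniformity_basis_edist.tendsto_right_iff.2 fun ε hε ↦ ?_
  filter_upwards [huf.eventually_lt_const hε] with i hi
  calc edist (∫ x in A, f x ∂μ i) (∫ x in A, u i x ∂μ i)
      = ‖∫ x in A, (u i x - f x) ∂μ i‖ₑ := by
        rw [edist_comm, edist_eq_enorm_sub, integral_sub (hu i).integrableOn (hf i).integrableOn]
    _ ≤ ∫⁻ x in A, ‖u i x - f x‖ₑ ∂μ i := enorm_integral_le_lintegral_enorm _
    _ ≤ ∫⁻ x, edist (u i x) (f x) ∂μ i := by
        simpa only [edist_eq_enorm_sub] using setLIntegral_le_lintegral A _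
    _ < ε := hi

end UniformAbsoluteContinuity

section Approximation

variable {Ω E : Type*} [MeasurableSpace Ω] [NormedAddCommGroup E]

lemma exists_simpleFunc_tendsto_norm_le {f : Ω → E} (hf : StronglyMeasurable f) :
    ∃ s : ℕ → SimpleFunc Ω E, (∀ x, Tendsto (fun k ↦ s k x) atTop (𝓝 (f x))) ∧
      ∀ k x, ‖s k x‖ ≤ 2 * ‖f x‖ := by
  borelize E
  have := hf.separableSpace_range_union_singleton (b := 0)
  have h0 : (0 : E) ∈ Set.range f ∪ {0} := by simp
  refine ⟨SimpleFunc.approxOn f hf.measurable _ 0 h0, fun x ↦ ?_, fun k x ↦ ?_⟩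
  · exact SimpleFunc.tendsto_approxOn hf.measurable h0 (subset_closure (by simp))
  · exact (SimpleFunc.norm_approxOn_zero_le hf.measurable h0 x k).trans_eq (two_mul _).symm

end Approximation

section SetwiseConvergence

variable {Ω ι κ E : Type*} [MeasurableSpace Ω] {l : Filter ι} {m : Measure Ω} {μ : ι → Measure Ω}

lemma TendstoSetwise.restrict (h : TendstoSetwise μ l m) {A : Set Ω} (hA : MeasurableSet A) :
    TendstoSetwise (fun i ↦ (μ i).restrict A) l (m.restrict A) := fun B hB ↦ by
  simpa only [Measure.restrict_apply hB] using h _ (hB.inter hA)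

lemma TendstoSetwise.lintegral_le_liminf (h : TendstoSetwise μ l m) (g : Ω → ℝ≥0∞) :
    ∫⁻ x, g x ∂m ≤ liminf (fun i ↦ ∫⁻ x, g x ∂μ i) l := by
  rw [lintegral_eq_nnreal]
  refine iSup₂_le fun φ hφ ↦ ?_
  have hlim : Tendsto (fun i ↦ (φ.map ((↑) : ℝ≥0 → ℝ≥0∞)).lintegral (μ i)) l
      (𝓝 ((φ.map ((↑) : ℝ≥0 → ℝ≥0∞)).lintegral m)) := by
    simp only [SimpleFunc.map_lintegral]
    exact tendsto_finsetSum _ fun c _ ↦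
      ENNReal.Tendsto.const_mul (h _ (φ.measurableSet_fiber c)) (Or.inr ENNReal.coe_ne_top)
  rcases l.eq_or_neBot with rfl | _
  · simp
  rw [← hlim.liminf_eq]
  refine liminf_le_liminf (Eventually.of_forall fun i ↦ ?_)
  rw [← SimpleFunc.lintegral_eq_lintegral]
  exact lintegral_mono hφ

lemma TendstoSetwise.unifAbsContIntegrals [l.NeBot] [ENorm E] {f : Ω → E}
    (h : TendstoSetwise μ l m) (hac : UnifAbsCont μ m)
    (hint : UnifAbsContIntegrals (fun _ ↦ f) μ) :
    UnifAbsContIntegrals (fun _ : κ ↦ f) (fun _ ↦ m) := by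
  intro ε hε
  obtain ⟨δ', hδ', hf⟩ := hint ε hε
  obtain ⟨δ, hδ, hμ⟩ := hac δ' hδ'
  refine ⟨δ, hδ, fun _ A hA hAδ ↦ ((h.restrict hA).lintegral_le_liminf _).trans ?_⟩
  exact liminf_le_of_frequently_le' (Frequently.of_forall fun i ↦ hf i A hA (hμ A hA hAδ i))

variable [IsFiniteMeasure m]

lemma TendstoSetwise.eventually_measure_univ_le (h : TendstoSetwise μ l m) :
    ∀ᶠ i in l, μ i Set.univ ≤ m Set.univ + 1 :=
  (h _ .univ).eventually_le_const (ENNReal.lt_add_right (measure_ne_top _ _) one_ne_zero)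

variable [NormedAddCommGroup E] [NormedSpace ℝ E] {f : Ω → E}

lemma TendstoSetwise.integrable [l.NeBot] (h : TendstoSetwise μ l m) (hac : UnifAbsCont μ m)
    (hf : StronglyMeasurable f) (hint : UnifAbsContIntegrals (fun _ ↦ f) μ) : Integrable f m :=
  (h.unifAbsContIntegrals hac hint).integrable () hf.aestronglyMeasurable

variable [∀ i, IsFiniteMeasure (μ i)] [CompleteSpace E]

lemma TendstoSetwise.tendsto_integral_simpleFunc (h : TendstoSetwise μ l m)
    (s : SimpleFunc Ω E) : Tendsto (fun i ↦ ∫ x, s x ∂μ i) l (𝓝 (∫ x, s x ∂m)) := by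
  simp only [SimpleFunc.integral_eq_sum _ (s.integrable_of_isFiniteMeasure)]
  refine tendsto_finsetSum _ fun c _ ↦ Tendsto.smul_const ?_ c
  exact (ENNReal.tendsto_toReal (measure_ne_top _ _)).comp (h _ (s.measurableSet_fiber c))

variable [l.NeBot]

theorem TendstoSetwise.tendsto_setIntegral (h : TendstoSetwise μ l m) (hac : UnifAbsCont μ m)
    (hf : StronglyMeasurable f) (hint : UnifAbsContIntegrals (fun _ ↦ f) μ)
    {A : Set Ω} (hA : MeasurableSet A) :
    Tendsto (fun i ↦ ∫ x in A, f x ∂μ i) l (𝓝 (∫ x in A, f x ∂m)) := by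
  obtain ⟨s, hs, hsf⟩ := exists_simpleFunc_tendsto_norm_le hf
  have hs_meas : TendstoInMeasure m (fun k ↦ s k) atTop f :=
    tendstoInMeasure_of_tendsto_ae (fun k ↦ (s k).aestronglyMeasurable) (ae_of_all _ hs)
  have hsimple (k : ℕ) :
      Tendsto (fun i ↦ ∫ x in A, s k x ∂μ i) l (𝓝 (∫ x in A, s k x ∂m)) :=
    (h.restrict hA).tendsto_integral_simpleFunc (s k)
  have hbound (k : ℕ) (x : Ω) : ‖s k x‖ₑ ≤ 2 * ‖f x‖ₑ := by
    simpa [ENNReal.ofReal_mul] using ENNReal.ofReal_le_ofReal (hsf k x)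
  have hL1 : Tendsto (fun p : ℕ × ι ↦ ∫⁻ x, edist (s p.1 x) (f x) ∂μ p.2) (atTop ×ˢ l) (𝓝 0) :=
    tendsto_lintegral_edist_of_tendstoInMeasure (C := m Set.univ + 1) (by finiteness)
      (tendsto_snd.eventually h.eventually_measure_univ_le) (hac.comp Prod.snd)
      (fun _ ↦ hf.aestronglyMeasurable)
      ((hint.comp Prod.snd).of_enorm_le_mul ENNReal.ofNat_ne_top fun p ↦ hbound p.1)
      (hint.comp Prod.snd) (hs_meas.comp tendsto_fst)
  have hunif : TendstoUniformlyOnFilter (fun k i ↦ ∫ x in A, s k x ∂μ i)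
      (fun i ↦ ∫ x in A, f x ∂μ i) atTop l :=
    tendstoUniformlyOnFilter_iff_tendsto.2 <| tendsto_setIntegral_uniformity
      (fun p : ℕ × ι ↦ (s p.1).integrable_of_isFiniteMeasure)
      (fun p : ℕ × ι ↦ hint.integrable p.2 hf.aestronglyMeasurable) hL1 A
  refine hunif.tendsto_of_eventually_tendsto (Eventually.of_forall hsimple) ?_
  exact tendsto_integral_of_dominated_convergence (fun x ↦ 2 * ‖f x‖)
    (fun k ↦ (s k).aestronglyMeasurable)
    ((h.integrable hac hf hint).norm.const_mul 2).integrableOn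
    (fun k ↦ ae_of_all _ (hsf k)) (ae_of_all _ hs)

theorem TendstoSetwise.tendsto_setIntegral_of_tendstoInMeasure {F : ι → Ω → E}
    (h : TendstoSetwise μ l m) (hac : UnifAbsCont μ m)
    (hF : ∀ i, AEStronglyMeasurable (F i) (μ i)) (hf : StronglyMeasurable f)
    (hFf : TendstoInMeasure m F l f) (hint_F : UnifAbsContIntegrals F μ)
    (hint_f : UnifAbsContIntegrals (fun _ ↦ f) μ) {A : Set Ω} (hA : MeasurableSet A) :
    Tendsto (fun i ↦ ∫ x in A, F i x ∂μ i) l (𝓝 (∫ x in A, f x ∂m)) := by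
  have hL1 : Tendsto (fun i ↦ ∫⁻ x, edist (F i x) (f x) ∂μ i) l (𝓝 0) :=
    tendsto_lintegral_edist_of_tendstoInMeasure (C := m Set.univ + 1) (by finiteness)
      h.eventually_measure_univ_le hac (fun _ ↦ hf.aestronglyMeasurable) hint_F hint_f hFf
  exact (h.tendsto_setIntegral hac hf hint_f hA).congr_uniformity <|
    tendsto_setIntegral_uniformity (fun i ↦ hint_F.integrable i (hF i))
      (fun i ↦ hint_f.integrable i hf.aestronglyMeasurable) hL1 A

end SetwiseConvergence

section VagueConvergence

lemma abs_integral_sub_measureReal_le {Ω : Type*} [MeasurableSpace Ω] {ν : Measure Ω}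
    [IsFiniteMeasure ν] {g : Ω → ℝ} (hg : Integrable g ν) {A D : Set Ω} (hA : MeasurableSet A)
    (hD : MeasurableSet D) (hgA : ∀ x, |g x - A.indicator 1 x| ≤ D.indicator 1 x) :
    |∫ x, g x ∂ν - ν.real A| ≤ ν.real D := by
  have hint {B : Set Ω} (hB : MeasurableSet B) : Integrable (B.indicator (1 : Ω → ℝ)) ν :=
    (integrable_const 1).indicator hB
  rw [← integral_indicator_one hA, ← integral_indicator_one hD, ← integral_sub hg (hint hA),
    ← Real.norm_eq_abs]
  exact norm_integral_le_of_norm_le (hint hD) (ae_of_all _ hgA)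

variable {Ω ι : Type*} [TopologicalSpace Ω] [LocallyCompactSpace Ω] [R1Space Ω]
  [MeasurableSpace Ω] [BorelSpace Ω] {l : Filter ι} {m : Measure Ω} [IsFiniteMeasure m]
  [m.InnerRegular] {μ : ι → Measure Ω}

variable (m) in
lemma exists_hasCompactSupport_abs_sub_indicator_le {A : Set Ω} (hA : MeasurableSet A)
    {δ : ℝ≥0∞} (hδ : 0 < δ) :
    ∃ g : C(Ω, ℝ), HasCompactSupport g ∧ ∃ D, MeasurableSet D ∧ m D < δ ∧
      ∀ x, |g x - A.indicator 1 x| ≤ D.indicator 1 x := by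
  have hδ2 : δ / 2 ≠ 0 := (ENNReal.half_pos hδ.ne').ne'
  obtain ⟨K, hKA, hK, hKc, hmK⟩ :=
    hA.exists_isCompact_isClosed_sdiff_lt (measure_ne_top m A) hδ2
  obtain ⟨U, hAU, hU, -, hmU⟩ := hA.exists_isOpen_sdiff_lt (measure_ne_top m A) hδ2
  obtain ⟨g, hgK, hgU, hg, hg01⟩ := exists_continuous_one_zero_of_isCompact hK
    hU.isClosed_compl (Set.disjoint_compl_right_iff_subset.2 (hKA.trans hAU))
  refine ⟨g, hg, U \ K, hU.measurableSet.diff hKc.measurableSet, ?_, fun x ↦ ?_⟩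
  · calc m (U \ K) ≤ m (U \ A ∪ A \ K) := measure_mono (sdiff_triangle U A K)
      _ ≤ m (U \ A) + m (A \ K) := measure_union_le _ _
      _ < δ / 2 + δ / 2 := ENNReal.add_lt_add hmU hmK
      _ = δ := ENNReal.add_halves δ
  · by_cases hxK : x ∈ K
    · simp [hgK hxK, hKA hxK, hxK]
    by_cases hxU : x ∈ U
    · have hA01 : A.indicator 1 x ∈ Set.Icc (0 : ℝ) 1 := by by_cases hxA : x ∈ A <;> simp [hxA]
      simpa [hxK, hxU, Real.dist_eq] using Real.dist_le_of_mem_Icc_01 (hg01 x) hA01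
    · have hxA : x ∉ A := fun h ↦ hxU (hAU h)
      simp [hgU hxU, hxA, hxU]

theorem TendstoVaguely.tendstoSetwise [∀ i, IsFiniteMeasure (μ i)] (h : TendstoVaguely μ l m)
    (hac : UnifAbsCont μ m) : TendstoSetwise μ l m := by
  intro A hA
  rw [← ENNReal.tendsto_toReal_iff (fun _ ↦ measure_ne_top _ _) (measure_ne_top _ _)]
  refine Metric.tendsto_nhds.2 fun ε hε ↦ ?_
  have hε3 : 0 < ENNReal.ofReal (ε / 3) := by positivity
  obtain ⟨δ, hδ, hμ⟩ := hac _ hε3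
  obtain ⟨g, hg, D, hD, hmD, hgA⟩ :=
    exists_hasCompactSupport_abs_sub_indicator_le m hA (lt_min hδ hε3)
  have happrox (ν : Measure Ω) [IsFiniteMeasure ν] (hνD : ν D < ENNReal.ofReal (ε / 3)) :
      |∫ x, g x ∂ν - ν.real A| < ε / 3 :=
    (abs_integral_sub_measureReal_le (g.continuous.integrable_of_hasCompactSupport hg) hA hD
      hgA).trans_lt (ENNReal.toReal_lt_of_lt_ofReal hνD)
  have hm := happrox m (hmD.trans_le (min_le_right _ _))
  filter_upwards [Metric.tendsto_nhds.1 (h g g.continuous hg.is_zero_at_infty) (ε / 3)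
    (by positivity)] with i hi
  have hμi := happrox (μ i) (hμ D hD (hmD.trans_le (min_le_left _ _)) i)
  rw [Real.dist_eq] at hi ⊢
  change |(μ i).real A - m.real A| < ε
  grind

end VagueConvergence

theorem tendsto_setIntegral_of_tendstoInMeasure_general
    {Ω : Type*} [TopologicalSpace Ω] [LocallyCompactSpace Ω] [R1Space Ω]
    [MeasurableSpace Ω] [BorelSpace Ω] {ι : Type*} {l : Filter ι} [l.NeBot]
    {E : Type*} [NormedAddCommGroup E] [NormedSpace ℝ E] [CompleteSpace E]
    {m : Measure Ω} [IsFiniteMeasure m] [m.InnerRegular]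
    {μ : ι → Measure Ω} [∀ i, IsFiniteMeasure (μ i)] {f : Ω → E} {F : ι → Ω → E}
    (hF : ∀ i, AEStronglyMeasurable (F i) (μ i)) (hf : StronglyMeasurable f)
    (hFf : TendstoInMeasure m F l f) (hint_F : UnifAbsContIntegrals F μ)
    (hint_f : UnifAbsContIntegrals (fun _ ↦ f) μ) (hv : TendstoVaguely μ l m)
    (hac : UnifAbsCont μ m) :
    Integrable f m ∧ ∀ A : Set Ω, MeasurableSet A →
      Tendsto (fun i ↦ ∫ x in A, F i x ∂μ i) l (𝓝 (∫ x in A, f x ∂m)) := by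
  have h : TendstoSetwise μ l m := hv.tendstoSetwise hac
  exact ⟨h.integrable hac hf hint_f, fun A hA ↦
    h.tendsto_setIntegral_of_tendstoInMeasure hac hF hf hFf hint_F hint_f hA⟩

/-- Variant of the main convergence theorem with convergence in `m`-measure in place of
`m`-a.e. convergence: `f ∈ L¹(m)` and `∫_A fₙ dmₙ → ∫_A f dm` for every Borel set `A`. -/
theorem tendsto_setIntegral_of_tendstoInMeasure
    {Ω : Type*} [TopologicalSpace Ω] [LocallyCompactSpace Ω] [T2Space Ω]
    [MeasurableSpace Ω] [BorelSpace Ω]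
    (m : Measure Ω) (mseq : ℕ → Measure Ω)
    [IsFiniteMeasure m] (hfin : ∀ n, IsFiniteMeasure (mseq n))
    (hRadon : m.InnerRegular)
    (f : Ω → ℝ) (fseq : ℕ → Ω → ℝ)
    (hmeas : ∀ n, Measurable (fseq n))
    (hfseqint : ∀ n, Integrable (fseq n) (mseq n))
    (hfint : ∀ n, Integrable f (mseq n))
    -- (i') convergence in m-measure
    (hmeasconv : ∀ η : ℝ, 0 < η →
      Tendsto (fun n => m {t | η < |fseq n t - f t|}) atTop (𝓝 0))
    (hf : Continuous f)
    (huacseq : ∀ ε : ℝ, 0 < ε → ∃ δ : ℝ, 0 < δ ∧ ∀ n, ∀ A : Set Ω, MeasurableSet A →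
      mseq n A < ENNReal.ofReal δ → ∫ x in A, |fseq n x| ∂(mseq n) < ε)
    (huacf : ∀ ε : ℝ, 0 < ε → ∃ δ : ℝ, 0 < δ ∧ ∀ n, ∀ A : Set Ω, MeasurableSet A →
      mseq n A < ENNReal.ofReal δ → ∫ x in A, |f x| ∂(mseq n) < ε)
    (hvague : ∀ g : Ω → ℝ, Continuous g → Tendsto g (cocompact Ω) (𝓝 0) →
      Tendsto (fun n => ∫ x, g x ∂(mseq n)) atTop (𝓝 (∫ x, g x ∂m)))
    (huac : ∀ ε : ℝ, 0 < ε → ∃ δ : ℝ, 0 < δ ∧ ∀ E : Set Ω, MeasurableSet E →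
      m E < ENNReal.ofReal δ → ∀ n, mseq n E < ENNReal.ofReal ε) :
    Integrable f m ∧
      ∀ A : Set Ω, MeasurableSet A →
        Tendsto (fun n => ∫ x in A, fseq n x ∂(mseq n)) atTop (𝓝 (∫ x in A, f x ∂m)) := by
  exact tendsto_setIntegral_of_tendstoInMeasure_general (fun n ↦ (hmeas n).aestronglyMeasurable)
    hf.measurable.stronglyMeasurable (tendstoInMeasure_of_measure_lt_norm hmeasconv)
    (.of_setIntegral_norm_lt hfseqint huacseq) (.of_setIntegral_norm_lt hfint huacf) hvague
    (.of_ofReal huac)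
end
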